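/- Let C be a category with finite products and M a class of morphisms of C that contains all isomorphisms, is closed under composition, and is closed under binary products. If X is an M-coextensive object of C and p : X → A is any product projection of X, then A is M-coextensive. -/

import Mathlib

open CategoryTheory CategoryTheory.Limits

universe v u

variable {C : Type u} [Category.{v} C]

/-- `(p, q)` is a binary product diagram, exhibiting `X` as the product of `A` and `B`. -/
def IsBinaryProduct {X A B : C} (p : X ⟶ A) (q : X ⟶ B) : Prop :=
  Nonempty (IsLimit (BinaryFan.mk p q))

/-- `p : X ⟶ A` is a product projection. -/
def IsProductProjection {X A : C} (p : X ⟶ A) : Prop :=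
  ∃ (B : C) (q : X ⟶ B), IsBinaryProduct p q

/-- A pushout square whose two legs belong to the class `M`. -/
def IsMPushout (M : MorphismProperty C) {Z A B P : C}
    (f : Z ⟶ A) (g : Z ⟶ B) (a : A ⟶ P) (b : B ⟶ P) : Prop :=
  IsPushout f g a b ∧ M a ∧ M b

/-- `X` is an `M`-coextensive object. -/
structure MCoextensive (M : MorphismProperty C) (X : C) : Prop where
  pushout_exists : ∀ ⦃Y A : C⦄ (m : X ⟶ Y) (p : X ⟶ A), M m → IsProductProjection p →
    ∃ (P : C) (a : A ⟶ P) (b : Y ⟶ P), IsMPushout M p m a b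
  isBinaryProduct_iff : ∀ ⦃A₁ A₂ Y B₁ B₂ : C⦄ (π₁ : X ⟶ A₁) (π₂ : X ⟶ A₂)
    (f : X ⟶ Y) (p₁ : A₁ ⟶ B₁) (p₂ : A₂ ⟶ B₂) (π₁' : Y ⟶ B₁) (π₂' : Y ⟶ B₂),
    IsBinaryProduct π₁ π₂ → M f → M p₁ → M p₂ →
    π₁ ≫ p₁ = f ≫ π₁' → π₂ ≫ p₂ = f ≫ π₂' →
    (IsBinaryProduct π₁' π₂' ↔ (IsMPushout M π₁ f p₁ π₁' ∧ IsMPushout M π₂ f p₂ π₂'))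

/-- The class of product projections. -/
def projections (C : Type u) [Category.{v} C] : MorphismProperty C :=
  fun _ _ f => IsProductProjection f

/-- `X` is projection-coextensive. -/
def ProjectionCoextensive (X : C) : Prop := MCoextensive (projections C) X

/-- `f` is a regular epimorphism (a coequalizer of some parallel pair). -/
def IsRegularEpimorphism {X Y : C} (f : X ⟶ Y) : Prop :=
  ∃ (W : C) (a b : W ⟶ X) (h : a ≫ f = b ≫ f), Nonempty (IsColimit (Cofork.ofπ f h))

/-- The class of regular epimorphisms. -/
def regularEpis (C : Type u) [Category.{v} C] : MorphismProperty C :=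
  fun _ _ f => IsRegularEpimorphism f

/-- `X` is regularly-coextensive. -/
def RegularlyCoextensive (X : C) : Prop := MCoextensive (regularEpis C) X

/-- A regular category: finitely complete, coequalizers of kernel pairs, and
regular epimorphisms are stable under pullback. -/
class IsRegularCategory (C : Type u) [Category.{v} C] [HasFiniteLimits C] : Prop where
  hasCoequalizer_kernelPair : ∀ {X Y : C} (f : X ⟶ Y),
    HasCoequalizer (pullback.fst f f) (pullback.snd f f)
  regularEpi_stable : ∀ {X Y Z : C} (f : X ⟶ Y) (g : Z ⟶ Y),
    IsRegularEpimorphism f → IsRegularEpimorphism (pullback.snd f g)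

/-- `X` has global support: the unique morphism to the terminal object is a regular epi. -/
def HasGlobalSupport [HasTerminal C] (X : C) : Prop :=
  IsRegularEpimorphism (terminal.from X)


lemma isBinaryProduct_iff_existsUnique {X A B : C} (p : X ⟶ A) (q : X ⟶ B) :
    IsBinaryProduct p q ↔ ∀ ⦃Z : C⦄ (f : Z ⟶ A) (g : Z ⟶ B), ∃! h : Z ⟶ X, h ≫ p = f ∧ h ≫ q = g := by
  constructor
  · rintro ⟨hl⟩ Z f g
    refine ⟨(BinaryFan.IsLimit.lift' hl f g).1, (BinaryFan.IsLimit.lift' hl f g).2, ?_⟩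
    rintro h ⟨h1, h2⟩
    have h3 := (BinaryFan.IsLimit.lift' hl f g).2
    apply BinaryFan.IsLimit.hom_ext hl
    · exact h1.trans h3.1.symm
    · exact h2.trans h3.2.symm
  · intro H
    refine ⟨BinaryFan.IsLimit.mk _ (fun f g => (H f g).choose) ?_ ?_ ?_⟩
    · intro T f g; exact (H f g).choose_spec.1.1
    · intro T f g; exact (H f g).choose_spec.1.2
    · intro T f g m h1 h2; exact (H f g).choose_spec.2 m ⟨h1, h2⟩

lemma IsBinaryProduct.swap' {X A B : C} {p : X ⟶ A} {q : X ⟶ B} (h : IsBinaryProduct p q) :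
    IsBinaryProduct q p := by
  rw [isBinaryProduct_iff_existsUnique] at h ⊢
  intro Z f g
  obtain ⟨k, ⟨h1, h2⟩, h3⟩ := h g f
  exact ⟨k, ⟨h2, h1⟩, fun y hy => h3 y ⟨hy.2, hy.1⟩⟩

lemma isBinaryProduct_id_terminal [HasFiniteProducts C] (X : C) :
    IsBinaryProduct (𝟙 X) (terminal.from X) := by
  rw [isBinaryProduct_iff_existsUnique]
  intro Z f g
  exact ⟨f, ⟨by simp, Subsingleton.elim _ _⟩, fun y hy => by simpa using hy.1⟩

lemma IsBinaryProduct.assoc' [HasFiniteProducts C] {X A B A₁ A₂ : C} {p : X ⟶ A} {q : X ⟶ B}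
    {a₁ : A ⟶ A₁} {a₂ : A ⟶ A₂} (h : IsBinaryProduct p q) (h' : IsBinaryProduct a₁ a₂) :
    IsBinaryProduct (p ≫ a₁) (prod.lift (p ≫ a₂) q) := by
  rw [isBinaryProduct_iff_existsUnique] at h h' ⊢
  intro Z f g
  obtain ⟨k, ⟨h1, h2⟩, h3⟩ := h' f (g ≫ prod.fst)
  obtain ⟨l, ⟨l1, l2⟩, l3⟩ := h k (g ≫ prod.snd)
  refine ⟨l, ⟨by rw [← Category.assoc, l1, h1], ?_⟩, ?_⟩
  · ext
    · rw [Category.assoc, prod.lift_fst, ← h2, ← l1, Category.assoc]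
    · rw [Category.assoc, prod.lift_snd, l2]
  · rintro y ⟨y1, y2⟩
    apply l3
    refine ⟨h3 _ ⟨by simpa using y1, ?_⟩, ?_⟩
    · rw [← y2, Category.assoc, Category.assoc, prod.lift_fst]
    · rw [← y2, Category.assoc, prod.lift_snd]

lemma isPushout_cancel {X A A₁ Y P : C} (p : X ⟶ A) [Epi p] {a : A ⟶ A₁} {f : A ⟶ Y}
    {i : A₁ ⟶ P} {j : Y ⟶ P} (h : IsPushout (p ≫ a) (p ≫ f) i j) : IsPushout a f i j := by
  have w : a ≫ i = f ≫ j := by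
    rw [← cancel_epi p]; simpa using h.w
  refine ⟨⟨w⟩, ⟨PushoutCocone.IsColimit.mk w
    (fun s => h.desc s.inl s.inr (by simp [s.condition])) ?_ ?_ ?_⟩⟩
  · intro s; simp
  · intro s; simp
  · intro s m h1 h2
    apply h.hom_ext <;> simp [h1, h2]

lemma proj_mem {M : MorphismProperty C}
    (hiso : ∀ ⦃A B : C⦄ (f : A ⟶ B), IsIso f → M f)
    {X : C} (hX : MCoextensive M X)
    {A B : C} {p : X ⟶ A} {q : X ⟶ B} (h : IsBinaryProduct p q) : M p :=
  ((hX.isBinaryProduct_iff p q (𝟙 X) (𝟙 A) (𝟙 B) p q h (hiso _ inferInstance)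
    (hiso _ inferInstance) (hiso _ inferInstance) (by simp) (by simp)).1 h).1.2.2

lemma terminal_mem [HasFiniteProducts C] {M : MorphismProperty C}
    (hiso : ∀ ⦃A B : C⦄ (f : A ⟶ B), IsIso f → M f)
    (hcomp : ∀ ⦃A B D : C⦄ (f : A ⟶ B) (g : B ⟶ D), M f → M g → M (f ≫ g))
    {X : C} (hX : MCoextensive M X)
    {A B : C} {p : X ⟶ A} {q : X ⟶ B} (h : IsBinaryProduct p q) :
    M (terminal.from A) := by
  have ht : M (terminal.from X) := proj_mem hiso hX (isBinaryProduct_id_terminal X).swap'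
  obtain ⟨P, a, b, hP⟩ := hX.pushout_exists (terminal.from X) p ht ⟨_, _, h⟩
  obtain ⟨Q, c, d, hQ⟩ := hX.pushout_exists (terminal.from X) q ht ⟨_, _, h.swap'⟩
  have hb := (hX.isBinaryProduct_iff p q (terminal.from X) a c b d h ht hP.2.1 hQ.2.1
    hP.1.w hQ.1.w).2 ⟨hP, hQ⟩
  rw [isBinaryProduct_iff_existsUnique] at hb
  have hi : IsIso (terminal.from P) := by
    refine ⟨b, ?_, Subsingleton.elim _ _⟩
    obtain ⟨k, ⟨k1, k2⟩, -⟩ := hb (𝟙 P) (terminal.from P ≫ d)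
    rw [← k1, Subsingleton.elim k (terminal.from P)]
  rw [Subsingleton.elim (terminal.from A) (a ≫ terminal.from P)]
  exact hcomp _ _ hP.2.1 (hiso _ hi)

lemma proj_epi [HasFiniteProducts C] {M : MorphismProperty C}
    (hiso : ∀ ⦃A B : C⦄ (f : A ⟶ B), IsIso f → M f)
    (hcomp : ∀ ⦃A B D : C⦄ (f : A ⟶ B) (g : B ⟶ D), M f → M g → M (f ≫ g))
    {X : C} (hX : MCoextensive M X)
    {A B : C} {p : X ⟶ A} {q : X ⟶ B} (h : IsBinaryProduct p q) : Epi p := by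
  have hh := ((hX.isBinaryProduct_iff p q p (𝟙 A) (terminal.from B) (𝟙 A) (terminal.from A) h
    (proj_mem hiso hX h) (hiso _ inferInstance) (terminal_mem hiso hcomp hX h.swap') rfl
    (Subsingleton.elim _ _)).1 (isBinaryProduct_id_terminal A)).1.1
  constructor
  intro Z u v huv
  have h1 := hh.inl_desc u v huv
  have h2 := hh.inr_desc u v huv
  exact h1.symm.trans h2

lemma fst_mem [HasFiniteProducts C] {M : MorphismProperty C}
    (hiso : ∀ ⦃A B : C⦄ (f : A ⟶ B), IsIso f → M f)
    (hcomp : ∀ ⦃A B D : C⦄ (f : A ⟶ B) (g : B ⟶ D), M f → M g → M (f ≫ g))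
    (hprod : ∀ ⦃A B A' B' : C⦄ (f : A ⟶ B) (g : A' ⟶ B'), M f → M g → M (prod.map f g))
    {A B : C} (h : M (terminal.from B)) : M (prod.fst : A ⨯ B ⟶ A) := by
  have : (prod.fst : A ⨯ B ⟶ A) =
    prod.map (𝟙 A) (terminal.from B) ≫ (prod.rightUnitor A).hom := by simp
  rw [this]
  exact hcomp _ _ (hprod _ _ (hiso _ inferInstance) h) (hiso _ inferInstance)

lemma coext_iff [HasFiniteProducts C] {M : MorphismProperty C}
    (hiso : ∀ ⦃A B : C⦄ (f : A ⟶ B), IsIso f → M f)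
    (hcomp : ∀ ⦃A B D : C⦄ (f : A ⟶ B) (g : B ⟶ D), M f → M g → M (f ≫ g))
    (hprod : ∀ ⦃A B A' B' : C⦄ (f : A ⟶ B) (g : A' ⟶ B'), M f → M g → M (prod.map f g))
    {X : C} (hX : MCoextensive M X)
    {A B : C} {p : X ⟶ A} {q : X ⟶ B} (h : IsBinaryProduct p q)
    {A₁ A₂ Y B₁ B₂ : C} {π₁ : A ⟶ A₁} {π₂ : A ⟶ A₂}
    {f : A ⟶ Y} {p₁ : A₁ ⟶ B₁} {p₂ : A₂ ⟶ B₂} {π₁' : Y ⟶ B₁} {π₂' : Y ⟶ B₂}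
    (hA : IsBinaryProduct π₁ π₂) (hf : M f) (h₁ : M p₁) (h₂ : M p₂)
    (w₁ : π₁ ≫ p₁ = f ≫ π₁') (w₂ : π₂ ≫ p₂ = f ≫ π₂') :
    IsBinaryProduct π₁' π₂' ↔ IsMPushout M (p ≫ π₁) (p ≫ f) p₁ π₁' ∧
      IsMPushout M (prod.lift (p ≫ π₂) q) (p ≫ f) (prod.fst ≫ p₂) π₂' :=
  hX.isBinaryProduct_iff _ _ _ _ _ _ _ (h.assoc' hA) (hcomp _ _ (proj_mem hiso hX h) hf) h₁
    (hcomp _ _ (fst_mem hiso hcomp hprod (terminal_mem hiso hcomp hX h.swap')) h₂)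
    (by simp [w₁])
    (by rw [← Category.assoc, prod.lift_fst, Category.assoc, w₂, Category.assoc])

/-- `M`-coextensivity is inherited by the factors of an `M`-coextensive object. -/
theorem mCoextensive_of_productProjection
    {C : Type u} [Category.{v} C] [HasFiniteProducts C] (M : MorphismProperty C)
    (hiso : ∀ ⦃A B : C⦄ (f : A ⟶ B), IsIso f → M f)
    (hcomp : ∀ ⦃A B D : C⦄ (f : A ⟶ B) (g : B ⟶ D), M f → M g → M (f ≫ g))
    (hprod : ∀ ⦃A B A' B' : C⦄ (f : A ⟶ B) (g : A' ⟶ B'), M f → M g → M (prod.map f g))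
    (X : C) (hX : MCoextensive M X)
    {A : C} (p : X ⟶ A) (hp : IsProductProjection p) : MCoextensive M A := by
  obtain ⟨B, q, h⟩ := hp
  have : Epi p := proj_epi hiso hcomp hX h
  have hpM := proj_mem hiso hX h
  constructor
  · rintro Y A₁ m a₁ hm ⟨A₂, a₂, hA⟩
    obtain ⟨P, a, b, hP⟩ := hX.pushout_exists (p ≫ m) (p ≫ a₁) (hcomp _ _ hpM hm)
      ⟨_, _, h.assoc' hA⟩
    exact ⟨P, a, b, isPushout_cancel p hP.1, hP.2⟩
  · intro A₁ A₂ Y B₁ B₂ π₁ π₂ f p₁ p₂ π₁' π₂' hA hf h₁ h₂ w₁ w₂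
    constructor
    · intro hY
      have e₁ := ((coext_iff hiso hcomp hprod hX h hA hf h₁ h₂ w₁ w₂).1 hY).1
      have e₂ := ((coext_iff hiso hcomp hprod hX h hA.swap' hf h₂ h₁ w₂ w₁).1 hY.swap').1
      exact ⟨⟨isPushout_cancel p e₁.1, e₁.2⟩, ⟨isPushout_cancel p e₂.1, e₂.2⟩⟩
    · rintro ⟨e₁, e₂⟩
      have hid : ∀ Z : C, M (𝟙 Z) := fun Z => hiso _ inferInstance
      have k₁ := (coext_iff hiso hcomp hprod hX h hA (hid _) (hid _) (hid _)
        (by simp) (by simp)).1 hA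
      have k₂ := (coext_iff hiso hcomp hprod hX h hA.swap' (hid _) (hid _) (hid _)
        (by simp) (by simp)).1 hA.swap'
      have s₁ := k₂.2.1
      have s₂ := k₁.2.1
      simp only [Category.comp_id] at s₁ s₂
      have hfst : ∀ Z : C, M (prod.fst : Z ⨯ B ⟶ Z) := fun Z =>
        fst_mem hiso hcomp hprod (terminal_mem hiso hcomp hX h.swap')
      have hlegs₁ : IsPushout (p ≫ π₁) p (𝟙 A₁) π₁ := by
        simpa using k₁.1.1
      refine (coext_iff hiso hcomp hprod hX h hA hf h₁ h₂ w₁ w₂).2 ⟨⟨?_, e₁.2⟩, ⟨?_, ?_, e₂.2.2⟩⟩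
      · simpa using hlegs₁.paste_vert e₁.1
      · exact s₂.paste_vert e₂.1
      · exact hcomp _ _ (hfst _) h₂
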